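/- Let G be a finite simple graph, P a perfect edge dominating set of G, and (B,Y,W) the 3-coloring of V(G) associated to P. Then every vertex belonging to a clique of G on t vertices with t ≥ 4 lies in B. -/

import Mathlib

/-- An edge `e` dominates an edge `f` if they share an endpoint (in particular,
every edge dominates itself). -/
def edgeDom {V : Type*} (e f : Sym2 V) : Prop := ∃ v, v ∈ e ∧ v ∈ f

/-- `P` is a perfect edge dominating set of `G`: `P ⊆ E(G)` and every edge of `G`
not in `P` is dominated by exactly one edge of `P`. -/
def IsPEDS {V : Type*} (G : SimpleGraph V) (P : Set (Sym2 V)) : Prop :=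
  P ⊆ G.edgeSet ∧ ∀ f ∈ G.edgeSet, f ∉ P → ∃! e, e ∈ P ∧ edgeDom e f

/-- A black vertex: incident to at least two edges of `P`. -/
def Blackv {V : Type*} (P : Set (Sym2 V)) (v : V) : Prop :=
  ∃ e ∈ P, ∃ f ∈ P, e ≠ f ∧ v ∈ e ∧ v ∈ f

/-- A yellow vertex: incident to exactly one edge of `P`. -/
def Yellowv {V : Type*} (P : Set (Sym2 V)) (v : V) : Prop := ∃! e, e ∈ P ∧ v ∈ e

/-- A white vertex: incident to no edge of `P`. -/
def Whitev {V : Type*} (P : Set (Sym2 V)) (v : V) : Prop := ∀ e ∈ P, v ∉ e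

/-!
By perfection, an edge outside `P` has a white end, and every neighbor of a white vertex is yellow.
Hence a white vertex of a clique on at least four vertices would have three pairwise adjacent yellow
neighbors. The edges between these lie in `P`, as neither end is white, so each of the three lies on
two edges of `P` and is black, a contradiction. Therefore the clique has no white vertex, all its
edges lie in `P`, and all its vertices are black.
-/

section

variable {V : Type*} {G : SimpleGraph V} {P : Set (Sym2 V)} {S : Set V} {a b c v w : V}

theorem exists_three_mem_ne_of_four_le_encard (hcard : 4 ≤ S.encard) (v : V) :
    ∃ a ∈ S, ∃ b ∈ S, ∃ c ∈ S, (v ≠ a ∧ v ≠ b ∧ v ≠ c) ∧ a ≠ b ∧ a ≠ c ∧ b ≠ c := by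
  have hcard' : 3 ≤ (S \ {v}).encard :=
    (tsub_le_tsub_right hcard 1).trans (S.encard_tsub_one_le_encard_sdiff_singleton v)
  obtain ⟨T, hTS, hT⟩ := Set.exists_subset_encard_eq hcard'
  obtain ⟨a, b, c, hab, hac, hbc, rfl⟩ := Set.encard_eq_three.mp hT
  obtain ⟨haS, hav⟩ := hTS (show a ∈ {a, b, c} by simp)
  obtain ⟨hbS, hbv⟩ := hTS (show b ∈ {a, b, c} by simp)
  obtain ⟨hcS, hcv⟩ := hTS (show c ∈ {a, b, c} by simp)
  exact ⟨a, haS, b, hbS, c, hcS, ⟨Ne.symm hav, Ne.symm hbv, Ne.symm hcv⟩, hab, hac, hbc⟩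

theorem Yellowv.not_whitev (hv : Yellowv P v) : ¬ Whitev P v := by
  obtain ⟨e, ⟨heP, hve⟩, -⟩ := hv
  exact fun hwhite => hwhite e heP hve

theorem Yellowv.not_blackv (hv : Yellowv P v) : ¬ Blackv P v := by
  rintro ⟨e, heP, f, hfP, hef, hve, hvf⟩
  exact hef (hv.unique ⟨heP, hve⟩ ⟨hfP, hvf⟩)

theorem Blackv.of_mk_mem_of_mk_mem (hab : a ≠ b) (ha : s(v, a) ∈ P) (hb : s(v, b) ∈ P) :
    Blackv P v :=
  ⟨s(v, a), ha, s(v, b), hb, mt Sym2.congr_right.mp hab, Sym2.mem_mk_left v a, Sym2.mem_mk_left v b⟩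

namespace IsPEDS

theorem yellowv_of_adj_of_whitev (hP : IsPEDS G P) (hvw : G.Adj v w) (hv : Whitev P v) :
    Yellowv P w := by
  have hvwP : s(v, w) ∉ P := fun h => hv _ h (Sym2.mem_mk_left v w)
  obtain ⟨e, ⟨heP, u, hue, hu⟩, huniq⟩ := hP.2 s(v, w) hvw hvwP
  have hwe : w ∈ e := by
    rcases Sym2.mem_iff.mp hu with rfl | rfl
    · exact absurd hue (hv e heP)
    · exact hue
  exact ⟨e, ⟨heP, hwe⟩, fun f ⟨hfP, hwf⟩ => huniq f ⟨hfP, w, hwf, Sym2.mem_mk_right v w⟩⟩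

theorem mk_mem_of_adj_of_not_whitev (hP : IsPEDS G P) (hvw : G.Adj v w) (hv : ¬ Whitev P v)
    (hw : ¬ Whitev P w) : s(v, w) ∈ P := by
  by_contra hvwP
  simp only [Whitev, not_forall, not_not] at hv hw
  obtain ⟨e, heP, hve⟩ := hv
  obtain ⟨f, hfP, hwf⟩ := hw
  have hef : e = f := (hP.2 s(v, w) hvw hvwP).unique
    ⟨heP, v, hve, Sym2.mem_mk_left v w⟩ ⟨hfP, w, hwf, Sym2.mem_mk_right v w⟩
  have he : e = s(v, w) := (Sym2.mem_and_mem_iff hvw.ne).mp ⟨hve, hef ▸ hwf⟩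
  exact hvwP (he ▸ heP)

theorem not_whitev_of_adj_path (hP : IsPEDS G P) (hva : G.Adj v a) (hvb : G.Adj v b)
    (hvc : G.Adj v c) (hba : G.Adj b a) (hbc : G.Adj b c) (hac : a ≠ c) : ¬ Whitev P v := by
  intro hv
  have ha : Yellowv P a := hP.yellowv_of_adj_of_whitev hva hv
  have hb : Yellowv P b := hP.yellowv_of_adj_of_whitev hvb hv
  have hc : Yellowv P c := hP.yellowv_of_adj_of_whitev hvc hv
  have hbaP : s(b, a) ∈ P := hP.mk_mem_of_adj_of_not_whitev hba hb.not_whitev ha.not_whitev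
  have hbcP : s(b, c) ∈ P := hP.mk_mem_of_adj_of_not_whitev hbc hb.not_whitev hc.not_whitev
  exact hb.not_blackv (.of_mk_mem_of_mk_mem hac hbaP hbcP)

theorem not_whitev_of_isClique (hP : IsPEDS G P) (hclique : G.IsClique S) (hcard : 4 ≤ S.encard)
    (hv : v ∈ S) : ¬ Whitev P v := by
  obtain ⟨a, ha, b, hb, c, hc, ⟨hva, hvb, hvc⟩, hab, hac, hbc⟩ :=
    exists_three_mem_ne_of_four_le_encard hcard v
  exact hP.not_whitev_of_adj_path (hclique hv ha hva) (hclique hv hb hvb) (hclique hv hc hvc)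
    (hclique hb ha hab.symm) (hclique hb hc hbc) hac

theorem mk_mem_of_isClique (hP : IsPEDS G P) (hclique : G.IsClique S) (hcard : 4 ≤ S.encard)
    (hv : v ∈ S) (hw : w ∈ S) (hvw : v ≠ w) : s(v, w) ∈ P :=
  hP.mk_mem_of_adj_of_not_whitev (hclique hv hw hvw)
    (hP.not_whitev_of_isClique hclique hcard hv) (hP.not_whitev_of_isClique hclique hcard hw)

end IsPEDS

end

theorem clique_black_general {V : Type*} (G : SimpleGraph V) (P : Set (Sym2 V)) (hP : IsPEDS G P)
    (S : Set V) (hclique : G.IsClique S) (hcard : 4 ≤ S.encard) : ∀ v ∈ S, Blackv P v := by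
  intro v hv
  obtain ⟨a, ha, b, hb, -, -, ⟨hva, hvb, -⟩, hab, -, -⟩ :=
    exists_three_mem_ne_of_four_le_encard hcard v
  exact .of_mk_mem_of_mk_mem hab (hP.mk_mem_of_isClique hclique hcard hv ha hva)
    (hP.mk_mem_of_isClique hclique hcard hv hb hvb)

/-- Every vertex of a clique on at least 4 vertices is black with respect to any
perfect edge dominating set. -/
theorem clique_black {V : Type*} [Fintype V] (G : SimpleGraph V)
    (P : Set (Sym2 V)) (hP : IsPEDS G P) (S : Finset V)
    (hclique : G.IsClique (S : Set V)) (hcard : 4 ≤ S.card) :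
    ∀ v ∈ S, Blackv P v := by
  exact clique_black_general G P hP S hclique
    (by rwa [Set.encard_coe_eq_coe_finsetCard, Nat.ofNat_le_cast])
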